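/- Let q = 2^m where m ≥ 4 is an even integer, and let F(x) = x^{3q-2} be the power function over F_{q^2}. Then the differential uniformity of F equals q; that is, max over a ∈ F_{q^2}^*, b ∈ F_{q^2} of the number of x ∈ F_{q^2} with F(x + a) + F(x) = b is equal to q. -/

import Mathlib

/-! The power map is `F x = y ^ 3 / x ^ 2` for `x ≠ 0`, where `y = x ^ q` is the conjugate of `x`
under the involution of `K` fixing the subfield of order `q`. Scaling reduces everything to `a = 1`, and
clearing denominators turns `F (x + 1) + F x = b` into
`y ^ 3 + x ^ 2 * (y ^ 2 + y + 1) + b * (x ^ 4 + x ^ 2) = 0` (`diff_eq`).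

For `b = 1` the left side factors as `(y + x ^ 2) * (y + x) ^ 2`. The case `x ^ q = x ^ 2` gives
`x ^ 4 = x`, hence `x ^ q = x` because `q` is a power of `4`. So the solutions are exactly the fixed
points of `x ↦ x ^ q`, of which there are `q` (`ncard_fixed`).

For `b ≠ 1` put `c = b ^ q`. The conjugate equation has `x`, `y` swapped and `b` replaced by `c`.
Eliminating `y` between the two equations yields a polynomial in `x` of degree at most `16`
(`elimPoly`) whose coefficient at `x ^ 5` is `(b + 1) ^ 2 * (c + 1) ^ 2`, which is nonzero. Hence
there are at most `16 ≤ q` solutions. -/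

open Polynomial

/-! ### Elimination of the conjugate -/

/-- The resultant with respect to `y`, in characteristic two, of
`y ^ 3 + x ^ 2 * (y ^ 2 + y + 1) + b * (x ^ 4 + x ^ 2)` and
`x ^ 3 + y ^ 2 * (x ^ 2 + x + 1) + c * (y ^ 4 + y ^ 2)`, as a polynomial in `x`. -/
noncomputable def elimPoly {K : Type*} [Field K] (b c : K) : K[X] :=
  C (b ^ 2 * c ^ 3 + b ^ 2 * c ^ 2 + b ^ 2 * c + b ^ 2 + c ^ 3 + c ^ 2 + c + 1) * X ^ 4 +
  C (b ^ 2 * c ^ 2 + b ^ 2 + c ^ 2 + 1) * X ^ 5 +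
  C (b ^ 2 * c ^ 2 + b ^ 2 * c + c ^ 2 + c) * X ^ 6 +
  C (b ^ 2 * c ^ 2 + b ^ 2 * c + b ^ 2 + c) * X ^ 7 +
  C (b ^ 4 * c ^ 3 + b ^ 2 * c ^ 3 + b ^ 2 + c ^ 3 + c ^ 2 + c) * X ^ 8 +
  C (b ^ 2 * c + c ^ 2 + c + 1) * X ^ 9 +
  C (b ^ 2 + c ^ 2) * X ^ 10 +
  C (b ^ 2 * c ^ 2 + b ^ 2 * c + b ^ 2 + c) * X ^ 11 +
  C (b ^ 2 * c ^ 2 + 1) * X ^ 12 +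
  C (b ^ 2 * c ^ 2 + b ^ 2 * c + b ^ 2 + c) * X ^ 13 +
  C (b ^ 2 * c ^ 2 + b ^ 2 * c + b ^ 2 + c) * X ^ 14 +
  C (b ^ 4 * c ^ 3 + b ^ 2 * c) * X ^ 16

/-- A common zero `(x, y)` of the two conjugate equations has `x` a root of the resultant. -/
theorem elimPoly_eval {K : Type*} [Field K] [CharP K 2] (x y b c : K)
    (hP : y ^ 3 + x ^ 2 * (y ^ 2 + y + 1) + b * (x ^ 4 + x ^ 2) = 0)
    (hQ : x ^ 3 + y ^ 2 * (x ^ 2 + x + 1) + c * (y ^ 4 + y ^ 2) = 0) :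
    (elimPoly b c).eval x = 0 := by
  -- Multiples of the second equation by `1`, `y`, `y ^ 2`, reduced modulo the monic cubic `hP`:
  -- a `3 × 3` linear system with the nonzero solution `(1, y, y ^ 2)`.
  have e0 : (x ^ 6 * b * c + x ^ 4 * b * c + x ^ 4 * c + x ^ 3) + (x ^ 4 * b * c + x ^ 4 * c + x ^
      2 * b * c + x ^ 2 * c) * y + (x ^ 4 * c + x ^ 2 * c + x ^ 2 + x + c + 1) * y ^ 2 = 0 := by grind
  have e1 : (x ^ 8 * b * c + x ^ 6 * b + x ^ 6 * c + x ^ 5 * b + x ^ 4 * c + x ^ 4 + x ^ 3 * b + x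
      ^ 3 + x ^ 2 * b * c + x ^ 2 * b + x ^ 2 * c + x ^ 2) + (x ^ 6 * b * c + x ^ 6 * c + x ^ 4 * b *
      c + x ^ 4 + x ^ 2 * c + x ^ 2) * y + (x ^ 6 * c + x ^ 4 * b * c + x ^ 4 + x ^ 3 + x ^ 2 * b * c
      + x ^ 2) * y ^ 2 = 0 := by grind
  have e2 : (x ^ 10 * b * c + x ^ 8 * b ^ 2 * c + x ^ 8 * b * c + x ^ 8 * b + x ^ 8 * c + x ^ 7 *
      b + x ^ 6 * b * c + x ^ 6 + x ^ 5 * b + x ^ 5 + x ^ 4 * b ^ 2 * c + x ^ 4 * b * c + x ^ 4 * b +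
      x ^ 4) + (x ^ 8 * b * c + x ^ 8 * c + x ^ 6 * b * c + x ^ 6 * b + x ^ 6 * c + x ^ 6 + x ^ 5 * b
      + x ^ 5 + x ^ 4 * b * c + x ^ 4 * c + x ^ 3 * b + x ^ 3 + x ^ 2 * b * c + x ^ 2 * b + x ^ 2 * c
      + x ^ 2) * y + (x ^ 8 * c + x ^ 6 * c + x ^ 6 + x ^ 5 + x ^ 2 * c + x ^ 2) * y ^ 2 = 0 := by
      grind
  -- The determinant of the system vanishes; the factors are the cofactors of the first column.
  have hdet :
      (b ^ 2 * c ^ 3 + b ^ 2 * c ^ 2 + b ^ 2 * c + b ^ 2 + c ^ 3 + c ^ 2 + c + 1) * x ^ 4 +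
      (b ^ 2 * c ^ 2 + b ^ 2 + c ^ 2 + 1) * x ^ 5 +
      (b ^ 2 * c ^ 2 + b ^ 2 * c + c ^ 2 + c) * x ^ 6 +
      (b ^ 2 * c ^ 2 + b ^ 2 * c + b ^ 2 + c) * x ^ 7 +
      (b ^ 4 * c ^ 3 + b ^ 2 * c ^ 3 + b ^ 2 + c ^ 3 + c ^ 2 + c) * x ^ 8 +
      (b ^ 2 * c + c ^ 2 + c + 1) * x ^ 9 +
      (b ^ 2 + c ^ 2) * x ^ 10 +
      (b ^ 2 * c ^ 2 + b ^ 2 * c + b ^ 2 + c) * x ^ 11 +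
      (b ^ 2 * c ^ 2 + 1) * x ^ 12 +
      (b ^ 2 * c ^ 2 + b ^ 2 * c + b ^ 2 + c) * x ^ 13 +
      (b ^ 2 * c ^ 2 + b ^ 2 * c + b ^ 2 + c) * x ^ 14 +
      (b ^ 4 * c ^ 3 + b ^ 2 * c) * x ^ 16 = 0 := by
    linear_combination (norm := grind)
      (x ^ 12 * b ^ 2 * c ^ 2 + x ^ 12 * b * c + x ^ 11 * b * c + x ^ 11 * c + x ^ 10 * b ^ 2 * c
      + x ^ 10 * b + x ^ 9 * b ^ 2 * c + x ^ 9 + x ^ 8 * b ^ 2 * c + x ^ 8 * b * c + x ^ 8 * c ^ 2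
      + x ^ 8 + x ^ 7 * b * c + x ^ 7 + x ^ 6 * b ^ 2 * c + x ^ 6 * b * c ^ 2 + x ^ 6 * c + x ^ 6
      + x ^ 5 * b ^ 2 * c + x ^ 5 * c + x ^ 4 * b ^ 2 * c ^ 2 + x ^ 4 * b ^ 2 * c + x ^ 4 * b * c
      ^ 2 + x ^ 4 * b + x ^ 4 * c ^ 2 + x ^ 4 * c) * e0 + (x ^ 10 * b * c + x ^ 10 * c + x ^ 9 * b
      * c + x ^ 9 * c + x ^ 8 * b + x ^ 8 + x ^ 6 * b * c + x ^ 6 * c + x ^ 5 * b * c + x ^ 5 * c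
      + x ^ 4 * b * c ^ 2 + x ^ 4 * c ^ 2 + x ^ 2 * b * c ^ 2 + x ^ 2 * b + x ^ 2 * c ^ 2 + x ^ 2)
      * e1 + (x ^ 8 * b ^ 2 * c ^ 2 + x ^ 8 * c + x ^ 6 * c + x ^ 6 + x ^ 5 * c + x ^ 5 + x ^ 4 *
      b ^ 2 * c ^ 2 + x ^ 4 * c ^ 2 + x ^ 3 * c + x ^ 3 + x ^ 2 * c ^ 2 + x ^ 2) * e2
  simpa [elimPoly] using hdet

theorem elimPoly_ne_zero {K : Type*} [Field K] [CharP K 2] (b c : K) (hb : b ≠ 1) (hc : c ≠ 1) :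
    elimPoly b c ≠ 0 := by
  intro h
  have h5 : (elimPoly b c).coeff 5 = 0 := by rw [h]; simp
  have hcoeff : b ^ 2 * c ^ 2 + b ^ 2 + c ^ 2 + 1 = 0 := by
    simpa [elimPoly, coeff_X_pow, coeff_C_mul, -map_add, -map_mul, -map_pow] using h5
  have hfac : ((b - 1) * (c - 1)) ^ 2 = 0 := by grind
  rcases mul_eq_zero.mp (pow_eq_zero_iff (two_ne_zero) |>.mp hfac) with h | h
  · exact hb (sub_eq_zero.mp h)
  · exact hc (sub_eq_zero.mp h)

theorem elimPoly_natDegree {K : Type*} [Field K] (b c : K) : (elimPoly b c).natDegree ≤ 16 := by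
  unfold elimPoly
  compute_degree

/-! ### Conjugation on a field with `q ^ 2` elements -/

section

variable {K : Type*} [Field K]

theorem conj_conj [Fintype K] {q : ℕ} (hK : Fintype.card K = q ^ 2) (x : K) : (x ^ q) ^ q = x := by
  rw [← pow_mul, ← sq, ← hK, FiniteField.pow_card]

theorem conj_add [CharP K 2] {q m : ℕ} (hq : q = 2 ^ m) (x y : K) :
    (x + y) ^ q = x ^ q + y ^ q := by
  have : Fact (Nat.Prime 2) := ⟨Nat.prime_two⟩
  rw [hq, add_pow_char_pow]

theorem ncard_root_le (p : K[X]) (hp : p ≠ 0) (S : Set K) (hS : ∀ x ∈ S, p.eval x = 0) :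
    S.ncard ≤ p.natDegree := by
  classical
  calc S.ncard ≤ (p.roots.toFinset : Set K).ncard := by
        apply Set.ncard_le_ncard _ (Finset.finite_toSet _)
        intro x hx
        simpa [hp] using hS x hx
    _ = p.roots.toFinset.card := Set.ncard_coe_finset _
    _ ≤ p.roots.card := Multiset.toFinset_card_le _
    _ ≤ p.natDegree := p.card_roots'

/-- The trace `x ↦ x ^ q + x` is additive with kernel the fixed points, and its image lies in its
kernel; since `card ker * card image = q ^ 2`, the kernel has at least `q` elements. It has at most
`q` since it consists of roots of `X ^ q - X`. -/
theorem ncard_fixed [Fintype K] [CharP K 2] {q m : ℕ} (hm : 0 < m) (hq : q = 2 ^ m)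
    (hK : Fintype.card K = q ^ 2) : {x : K | x ^ q = x}.ncard = q := by
  have hq1 : 1 < q := by rw [hq]; exact Nat.one_lt_two_pow hm.ne'
  apply le_antisymm
  · have h := ncard_root_le (X ^ q - X : K[X]) (FiniteField.X_pow_card_sub_X_ne_zero K hq1)
      {x : K | x ^ q = x} (by intro x hx; simpa [sub_eq_zero] using hx)
    rwa [FiniteField.X_pow_card_sub_X_natDegree_eq K hq1] at h
  · let T : K →+ K :=
      { toFun := fun x => x ^ q + x
        map_zero' := by simp [show q ≠ 0 by omega]
        map_add' := fun x y => by rw [conj_add hq]; ring }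
    have hker : (T.ker : Set K) = {x : K | x ^ q = x} := by
      ext x
      change x ^ q + x = 0 ↔ x ^ q = x
      exact CharTwo.add_eq_zero
    have hle : T.range ≤ T.ker := by
      rintro _ ⟨x, rfl⟩
      change (x ^ q + x) ^ q + (x ^ q + x) = 0
      rw [conj_add hq, conj_conj hK, CharTwo.add_eq_zero, add_comm]
    have hcard : Nat.card T.ker * Nat.card T.range = q ^ 2 := by
      rw [← AddSubgroup.index_ker, AddSubgroup.card_mul_index, Nat.card_eq_fintype_card, hK]
    have hcle : Nat.card T.range ≤ Nat.card T.ker :=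
      Nat.card_mono (Set.toFinite _) hle
    have hn : {x : K | x ^ q = x}.ncard = Nat.card T.ker := by rw [← hker]; rfl
    rw [hn]
    nlinarith

/-! ### The difference equation -/

/-- The equation `F (x + 1) + F x = b` with denominators cleared; it holds also for `x = 0, 1`. -/
theorem diff_eq [CharP K 2] {q m : ℕ} (hq : q = 2 ^ m) {x b : K}
    (h : (x + 1) ^ (3 * q - 2) + x ^ (3 * q - 2) = b) :
    (x ^ q) ^ 3 + x ^ 2 * ((x ^ q) ^ 2 + x ^ q + 1) + b * (x ^ 4 + x ^ 2) = 0 := by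
  have hq1 : 1 ≤ q := by rw [hq]; exact Nat.one_le_two_pow
  have key : ∀ z : K, z ^ (3 * q - 2) * z ^ 2 = (z ^ q) ^ 3 := fun z => by
    rw [← pow_add, ← pow_mul]; congr 1; omega
  have h0 := key x
  have h1 := key (x + 1)
  rw [conj_add hq, one_pow] at h1
  generalize x ^ q = y at *
  generalize x ^ (3 * q - 2) = u at *
  generalize (x + 1) ^ (3 * q - 2) = v at *
  subst h
  grind

theorem count_of_ne_one [Fintype K] [CharP K 2] {q m : ℕ} (hm : 4 ≤ m) (hq : q = 2 ^ m)
    (hK : Fintype.card K = q ^ 2) {b : K} (hb : b ≠ 1) :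
    {x : K | (x + 1) ^ (3 * q - 2) + x ^ (3 * q - 2) = b}.ncard ≤ q := by
  have hc : b ^ q ≠ 1 := fun h => hb (by rw [← conj_conj hK b, h, one_pow])
  have h16 : 16 ≤ q := by
    rw [hq]; exact Nat.pow_le_pow_right (n := 2) (by norm_num) hm
  refine (ncard_root_le _ (elimPoly_ne_zero b (b ^ q) hb hc) _ ?_).trans
    ((elimPoly_natDegree _ _).trans h16)
  intro x hx
  have hP := diff_eq hq hx
  refine elimPoly_eval x (x ^ q) b (b ^ q) hP ?_
  have hQ := congrArg (· ^ q) hP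
  have hcomm : ∀ (z : K) (n : ℕ), (z ^ n) ^ q = (z ^ q) ^ n := fun z n => pow_right_comm z n q
  simp only [conj_add hq, mul_pow, hcomm, conj_conj hK, one_pow] at hQ
  rw [zero_pow (by omega)] at hQ
  linear_combination hQ

theorem solutions_one [Fintype K] [CharP K 2] {q m : ℕ} (hme : Even m) (hq : q = 2 ^ m)
    (hK : Fintype.card K = q ^ 2) :
    {x : K | (x + 1) ^ (3 * q - 2) + x ^ (3 * q - 2) = 1} = {x : K | x ^ q = x} := by
  have hq1 : 1 ≤ q := by rw [hq]; exact Nat.one_le_two_pow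
  ext x
  simp only [Set.mem_ofPred_eq]
  constructor
  · intro h
    have hP := diff_eq hq h
    have hfac : (x ^ q + x ^ 2) * (x ^ q + x) ^ 2 = 0 := by
      generalize x ^ q = y at *
      grind
    rcases mul_eq_zero.mp hfac with h | h
    · rw [CharTwo.add_eq_zero] at h
      have h4 : x ^ 4 = x := by
        calc x ^ 4 = (x ^ 2) ^ 2 := by ring
          _ = (x ^ q) ^ q := by rw [← h, pow_right_comm, ← h]
          _ = x := conj_conj hK x
      obtain ⟨k, rfl⟩ := hme
      have hq4 : q = 4 ^ k := by rw [hq, ← two_mul, pow_mul]; norm_num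
      rw [hq4]
      clear * - h4
      induction k with
      | zero => simp
      | succ k ih => rw [pow_succ, pow_mul, ih, h4]
    · exact CharTwo.add_eq_zero.mp (pow_eq_zero_iff two_ne_zero |>.mp h)
  · intro h
    have key : ∀ z : K, z ^ q = z → z ^ (3 * q - 2) = z := by
      intro z hz
      rcases eq_or_ne z 0 with rfl | hz0
      · exact zero_pow (by omega)
      · apply mul_right_cancel₀ (pow_ne_zero 2 hz0)
        calc z ^ (3 * q - 2) * z ^ 2 = (z ^ q) ^ 3 := by
              rw [← pow_add, ← pow_mul]; congr 1; omega
          _ = z * z ^ 2 := by rw [hz]; ring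
    rw [key x h, key (x + 1) (by rw [conj_add hq, h, one_pow])]
    linear_combination CharTwo.add_self_eq_zero x

end

/-- For q = 2^m with m ≥ 4 even, the differential uniformity of
F(x) = x^{3q-2} over F_{q^2} equals q. -/
theorem stmt_14 (m : ℕ) (hm : 4 ≤ m) (hme : Even m) (q : ℕ) (hq : q = 2 ^ m)
    (K : Type*) [Field K] [Fintype K] [CharP K 2] (hK : Fintype.card K = q ^ 2) :
    (∀ a b : K, a ≠ 0 →
        {x : K | (x + a) ^ (3 * q - 2) + x ^ (3 * q - 2) = b}.ncard ≤ q) ∧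
    (∃ a b : K, a ≠ 0 ∧
        {x : K | (x + a) ^ (3 * q - 2) + x ^ (3 * q - 2) = b}.ncard = q) := by
  have hone : {x : K | (x + 1) ^ (3 * q - 2) + x ^ (3 * q - 2) = 1}.ncard = q := by
    rw [solutions_one hme hq hK, ncard_fixed (by omega) hq hK]
  refine ⟨fun a b ha => ?_, 1, 1, one_ne_zero, hone⟩
  -- `F` is multiplicative, so `x = a * z` reduces the difference `a` to `1`.
  have hset : {x : K | (x + a) ^ (3 * q - 2) + x ^ (3 * q - 2) = b} =
      Set.image (fun z => a * z)
        {z : K | (z + 1) ^ (3 * q - 2) + z ^ (3 * q - 2) = b / a ^ (3 * q - 2)} := by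
    have hiff : ∀ z : K, (a * z + a) ^ (3 * q - 2) + (a * z) ^ (3 * q - 2) = b ↔
        (z + 1) ^ (3 * q - 2) + z ^ (3 * q - 2) = b / a ^ (3 * q - 2) := fun z => by
      rw [eq_div_iff (pow_ne_zero _ ha), add_mul, ← mul_pow, ← mul_pow, add_mul, one_mul,
        mul_comm z a]
    ext x
    constructor
    · intro hx
      have hxa : a * (x / a) = x := mul_div_cancel₀ x ha
      exact ⟨x / a, (hiff _).mp (by rw [hxa]; exact hx), hxa⟩
    · rintro ⟨z, hz, rfl⟩
      exact (hiff z).mpr hz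
  rw [hset, Set.ncard_image_of_injective _ (mul_right_injective₀ ha)]
  by_cases hb : b / a ^ (3 * q - 2) = 1
  · rw [hb, hone]
  · exact count_of_ne_one hm hq hK hb
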